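/- In the rooted-tree setting, let A₀ be a vertex with A₀.length = n ≥ 1. Consider the set F of all functions f : List ℕ → ℝ such that f converges to 1 along every branch that passes through A₀ and f converges to 0 along every branch that does not pass through A₀. Then the infimum of Var f over f ∈ F equals 3^{−n} (and it is attained by the indicator function of the set of lists having A₀ as a prefix). -/

import Mathlib

/-- The set of vertices of the rooted tree determined by `children`:
the empty list is a vertex, and `s ++ [a]` is a vertex whenever `s` is a vertex
and `a ∈ children s`. -/
inductive IsVertex (children : List ℕ → Finset ℕ) : List ℕ → Prop
  | nil : IsVertex children []
  | append (s : List ℕ) (a : ℕ) : IsVertex children s → a ∈ children s →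
      IsVertex children (s ++ [a])

/-- The weighted tree variation
`Var f = Σ_{vertices s} Σ_{a ∈ children s} 3^{−(s.length+1)} · |f (s ++ [a]) − f s|`,
with values in `[0,∞]`. -/
noncomputable def treeVar (children : List ℕ → Finset ℕ) (f : List ℕ → ℝ) : ENNReal :=
  ∑' (s : {s : List ℕ // IsVertex children s}) (a : {a : ℕ // a ∈ children s.1}),
    ENNReal.ofReal ((3 : ℝ)⁻¹ ^ (s.1.length + 1) * |f (s.1 ++ [a.1]) - f s.1|)

/-- `x : ℕ → ℕ` is a branch if each of its initial segments is a vertex. -/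
def IsBranch (children : List ℕ → Finset ℕ) (x : ℕ → ℕ) : Prop :=
  ∀ n : ℕ, IsVertex children (List.ofFn (fun i : Fin n => x i))

/-- The branch `x` passes through the vertex `A` if `A` is the initial segment of `x`
of length `A.length`. -/
def PassesThrough (x : ℕ → ℕ) (A : List ℕ) : Prop :=
  A = List.ofFn (fun i : Fin A.length => x i)

/-- `f` converges to `c` along the branch `x` if `f [x 0, …, x (n−1)] → c` as `n → ∞`. -/
def ConvergesAlong (f : List ℕ → ℝ) (x : ℕ → ℕ) (c : ℝ) : Prop :=
  Filter.Tendsto (fun n : ℕ => f (List.ofFn (fun i : Fin n => x i))) Filter.atTop (nhds c)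

open Classical in
/-- variation below `v` -/
noncomputable def subVar (children : List ℕ → Finset ℕ) (f : List ℕ → ℝ) (v : List ℕ) : ENNReal :=
  ∑' s : List ℕ, if IsVertex children s ∧ v <+: s then
    ∑ a ∈ children s, ENNReal.ofReal ((3 : ℝ)⁻¹ ^ (s.length + 1) * |f (s ++ [a]) - f s|) else 0

theorem subVar_le_treeVar (children : List ℕ → Finset ℕ) (f : List ℕ → ℝ) (v : List ℕ) :
    subVar children f v ≤ treeVar children f := by
  classical
  unfold subVar treeVar
  have h := tsum_subtype {s | IsVertex children s} (fun s => ∑ a ∈ children s,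
    ENNReal.ofReal ((3 : ℝ)⁻¹ ^ (s.length + 1) * |f (s ++ [a]) - f s|))
  have h2 : (∑' (s : {s : List ℕ // IsVertex children s}) (a : {a : ℕ // a ∈ children s.1}),
    ENNReal.ofReal ((3 : ℝ)⁻¹ ^ (s.1.length + 1) * |f (s.1 ++ [a.1]) - f s.1|)) =
    ∑' (s : {s : List ℕ // IsVertex children s}), ∑ a ∈ children s.1,
    ENNReal.ofReal ((3 : ℝ)⁻¹ ^ (s.1.length + 1) * |f (s.1 ++ [a]) - f s.1|) := by
    refine tsum_congr fun s => ?_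
    exact Finset.tsum_subtype (children s.1) (fun a =>
      ENNReal.ofReal ((3 : ℝ)⁻¹ ^ (s.1.length + 1) * |f (s.1 ++ [a]) - f s.1|))
  rw [h2]
  refine le_trans ?_ (le_of_eq h.symm)
  refine ENNReal.tsum_le_tsum fun s => ?_
  by_cases hs : IsVertex children s
  · rw [Set.indicator_of_mem (by exact hs)]
    split_ifs <;> simp
  · simp [hs]

theorem subVar_step (children : List ℕ → Finset ℕ) (f : List ℕ → ℝ) (v : List ℕ)
    (hv : IsVertex children v) :
    ∑ a ∈ children v, (ENNReal.ofReal ((3 : ℝ)⁻¹ ^ (v.length + 1) * |f (v ++ [a]) - f v|)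
      + subVar children f (v ++ [a])) ≤ subVar children f v := by
  classical
  rw [Finset.sum_add_distrib]
  unfold subVar
  rw [← Summable.tsum_finsetSum (fun _ _ => ENNReal.summable)]
  set g : List ℕ → ENNReal := fun s => ∑ a ∈ children s,
    ENNReal.ofReal ((3 : ℝ)⁻¹ ^ (s.length + 1) * |f (s ++ [a]) - f s|) with hg
  change g v + _ ≤ _
  have e1 : g v = ∑' s, if s = v then g s else 0 := by
    rw [tsum_eq_single v]
    · simp
    · intro b hb; simp [hb]
  rw [e1, ← ENNReal.tsum_add]
  refine ENNReal.tsum_le_tsum fun s => ?_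
  change (if s = v then g s else 0) + (∑ a ∈ children v,
    if IsVertex children s ∧ v ++ [a] <+: s then g s else 0) ≤
    if IsVertex children s ∧ v <+: s then g s else 0
  by_cases hsv : s = v
  · subst hsv
    have : ∀ a, ¬ (s ++ [a] <+: s) := by
      intro a h
      have := h.length_le
      simp at this
    simp [this, hv]
  · by_cases hex : ∃ a ∈ children v, IsVertex children s ∧ v ++ [a] <+: s
    · obtain ⟨a, ha, hs, hp⟩ := hex
      rw [Finset.sum_eq_single a]
      · have : v <+: s := (List.prefix_append v [a]).trans hp
        simp [hsv, hs, hp, this]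
      · intro b _ hb
        rw [if_neg]
        rintro ⟨_, h⟩
        have := List.prefix_of_prefix_length_le h hp (by simp)
        have := this.eq_of_length (by simp)
        simp at this
        exact hb this
      · intro h; exact absurd ha h
    · push Not at hex
      rw [Finset.sum_eq_zero]
      · simp [hsv]
      · intro a ha
        rw [if_neg]
        rintro ⟨h1, h2⟩
        exact hex a ha h1 h2

theorem weight_cancel (k : ℕ) (r : ℝ) :
    (3 : ENNReal) ^ k * ENNReal.ofReal ((3 : ℝ)⁻¹ ^ k * r) = ENNReal.ofReal r := by
  have : (3 : ENNReal) = ENNReal.ofReal 3 := by simp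
  rw [this, ← ENNReal.ofReal_pow (by norm_num), ← ENNReal.ofReal_mul (by positivity), ← mul_assoc,
    ← mul_pow]
  norm_num

theorem exists_good_child (children : List ℕ → Finset ℕ)
    (hcard : ∀ s : List ℕ, IsVertex children s → 3 ≤ (children s).card)
    (f : List ℕ → ℝ) (v : List ℕ) (hv : IsVertex children v) :
    ∃ a ∈ children v, ENNReal.ofReal |f (v ++ [a]) - f v|
      + 3 ^ (v.length + 1) * subVar children f (v ++ [a])
        ≤ 3 ^ v.length * subVar children f v := by
  have hne : (children v).Nonempty := Finset.card_pos.mp (by have := hcard v hv; omega)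
  obtain ⟨a, ha, hmin⟩ := Finset.exists_min_image (children v)
    (fun a => ENNReal.ofReal ((3 : ℝ)⁻¹ ^ (v.length + 1) * |f (v ++ [a]) - f v|)
      + subVar children f (v ++ [a])) hne
  refine ⟨a, ha, ?_⟩
  have h1 := (Finset.card_nsmul_le_sum _ _ _ hmin).trans (subVar_step children f v hv)
  rw [nsmul_eq_mul] at h1
  have h3 : (3 : ENNReal) ≤ ((children v).card : ENNReal) := by exact_mod_cast hcard v hv
  have h2 := (mul_le_mul_left h3 _).trans h1
  calc _ = 3 ^ v.length * (3 * (ENNReal.ofReal ((3 : ℝ)⁻¹ ^ (v.length + 1) * |f (v ++ [a]) - f v|)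
      + subVar children f (v ++ [a]))) := by
        rw [← mul_assoc, ← pow_succ, mul_add, weight_cancel]
    _ ≤ _ := by gcongr

theorem IsVertex.of_prefix {children : List ℕ → Finset ℕ} {s : List ℕ} (hs : IsVertex children s) :
    ∀ t, t <+: s → IsVertex children t := by
  induction hs with
  | nil => intro t ht; rw [List.prefix_nil.mp ht]; exact .nil
  | append s a hs ha ih =>
    intro t ht
    rcases List.prefix_concat_iff.mp ht with h | h
    · rw [h]; exact .append s a hs ha
    · exact ih t h

theorem ofFn_prefix_add (x : ℕ → ℕ) (n k : ℕ) :
    List.ofFn (fun i : Fin n => x i) <+: List.ofFn (fun i : Fin (n + k) => x i) := by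
  induction k with
  | zero => exact List.prefix_rfl
  | succ k ih =>
    refine ih.trans ?_
    change _ <+: List.ofFn (fun i : Fin ((n + k) + 1) => x i)
    rw [List.ofFn_succ_last]
    exact List.prefix_append _ _

theorem ofFn_prefix (x : ℕ → ℕ) {n m : ℕ} (h : n ≤ m) :
    List.ofFn (fun i : Fin n => x i) <+: List.ofFn (fun i : Fin m => x i) := by
  obtain ⟨k, rfl⟩ := Nat.exists_eq_add_of_le h
  exact ofFn_prefix_add x n k

theorem passes_of_prefix {x : ℕ → ℕ} {A : List ℕ} {n : ℕ}
    (h : A <+: List.ofFn (fun i : Fin n => x i)) : PassesThrough x A := by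
  have hl := h.length_le
  rw [List.length_ofFn] at hl
  exact (List.prefix_of_prefix_length_le h (ofFn_prefix x hl) (by simp)).eq_of_length (by simp)

theorem prefix_of_passes {x : ℕ → ℕ} {A : List ℕ} {n : ℕ}
    (h : PassesThrough x A) (hn : A.length ≤ n) : A <+: List.ofFn (fun i : Fin n => x i) := by
  have := ofFn_prefix x hn
  unfold PassesThrough at h
  rwa [← h] at this

theorem subVar_lower (children : List ℕ → Finset ℕ)
    (hcard : ∀ s : List ℕ, IsVertex children s → 3 ≤ (children s).card)
    (f : List ℕ → ℝ) (c : ℝ) (v : List ℕ) (hv : IsVertex children v)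
    (hf : ∀ x, IsBranch children x → PassesThrough x v → ConvergesAlong f x c) :
    ENNReal.ofReal |c - f v| ≤ 3 ^ v.length * subVar children f v := by
  have hex := fun s : {s // IsVertex children s} => exists_good_child children hcard f s.1 s.2
  choose ch hch hle using hex
  let nxt : {s // IsVertex children s} → {s // IsVertex children s} :=
    fun s => ⟨s.1 ++ [ch s], .append _ _ s.2 (hch s)⟩
  let V : ℕ → {s // IsVertex children s} := fun k => Nat.rec ⟨v, hv⟩ (fun _ s => nxt s) k
  have hV0 : (V 0).1 = v := rfl
  have hVs : ∀ k, (V (k+1)).1 = (V k).1 ++ [ch (V k)] := fun k => rfl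
  have hlen : ∀ k, (V k).1.length = v.length + k := by
    intro k
    induction k with
    | zero => rfl
    | succ k ih => rw [hVs]; simp [ih]; omega
  let x : ℕ → ℕ := fun i => if i < v.length then v.getD i 0 else ch (V (i - v.length))
  have hx : ∀ k, List.ofFn (fun i : Fin (v.length + k) => x i) = (V k).1 := by
    intro k
    induction k with
    | zero =>
      rw [hV0]
      apply List.ext_getElem
      · simp
      · intro i h1 h2
        simp [x, h2]
    | succ k ih =>
      rw [hVs, ← ih]
      change List.ofFn (fun i : Fin ((v.length + k) + 1) => x i) = _
      rw [List.ofFn_succ_last]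
      congr 2
      simp [x]
  have hbr : IsBranch children x := by
    intro n
    refine (V n).2.of_prefix _ ?_
    rw [← hx n]
    exact ofFn_prefix x (by omega)
  have hpass : PassesThrough x v := (hx 0).symm
  have hinv : ∀ k, ENNReal.ofReal |f (V k).1 - f v| +
      3 ^ (V k).1.length * subVar children f (V k).1 ≤ 3 ^ v.length * subVar children f v := by
    intro k
    induction k with
    | zero => simp [hV0]
    | succ k ih =>
      refine le_trans ?_ ih
      refine le_trans ?_ (add_le_add le_rfl (hle (V k)))
      rw [hVs, ← add_assoc, List.length_append]
      refine add_le_add ?_ le_rfl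
      rw [← ENNReal.ofReal_add (abs_nonneg _) (abs_nonneg _)]
      apply ENNReal.ofReal_le_ofReal
      rw [add_comm]
      exact abs_sub_le _ _ _
  have hlim : Filter.Tendsto (fun k => ENNReal.ofReal |f (V k).1 - f v|) Filter.atTop
      (nhds (ENNReal.ofReal |c - f v|)) := by
    apply ENNReal.tendsto_ofReal
    have h := hf x hbr hpass
    unfold ConvergesAlong at h
    have h2 := h.comp (Filter.tendsto_add_atTop_nat v.length)
    have h3 : Filter.Tendsto (fun k => f (V k).1) Filter.atTop (nhds c) := by
      refine h2.congr fun k => ?_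
      simp only [Function.comp]
      rw [← hx k, add_comm]
    exact (h3.sub_const _).abs
  exact le_of_tendsto' hlim fun k => le_self_add.trans (hinv k)

theorem treeVar_indicator (children : List ℕ → Finset ℕ) (B : List ℕ) (b : ℕ)
    (hB : IsVertex children B) (hb : b ∈ children B) :
    treeVar children (fun s => if (B ++ [b]) <+: s then (1 : ℝ) else 0)
      = (3 : ENNReal)⁻¹ ^ (B ++ [b]).length := by
  have key : ∀ s a, ¬ (B ++ [b] = s ++ [a]) →
      ENNReal.ofReal ((3 : ℝ)⁻¹ ^ (s.length + 1) *
        |(if (B ++ [b]) <+: s ++ [a] then (1 : ℝ) else 0) - if (B ++ [b]) <+: s then (1 : ℝ) else 0|)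
      = 0 := by
    intro s a h
    simp [List.prefix_concat_iff, h]
  unfold treeVar
  rw [tsum_eq_single ⟨B, hB⟩, tsum_eq_single ⟨b, hb⟩]
  · have : ¬ (B ++ [b]) <+: B := by
      intro h
      have := h.length_le
      simp at this
    simp only [this, List.prefix_rfl, if_true, if_false]
    simp [ENNReal.ofReal_inv_of_pos, ENNReal.inv_pow]
  · rintro ⟨a, ha⟩ hne
    apply key
    intro h
    simp at h
    simp [h] at hne
  · rintro ⟨s, hs⟩ hne
    rw [ENNReal.tsum_eq_zero]
    rintro ⟨a, ha⟩
    apply key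
    intro h
    have := List.append_inj_left' h rfl
    simp [this] at hne

theorem treeVar_lower (children : List ℕ → Finset ℕ)
    (hcard : ∀ s : List ℕ, IsVertex children s → 3 ≤ (children s).card)
    (B : List ℕ) (b : ℕ) (hB : IsVertex children B) (hb : b ∈ children B)
    (f : List ℕ → ℝ) (hf : ∀ x : ℕ → ℕ, IsBranch children x →
          (PassesThrough x (B ++ [b]) → ConvergesAlong f x 1) ∧
          (¬ PassesThrough x (B ++ [b]) → ConvergesAlong f x 0)) :
    (3 : ENNReal)⁻¹ ^ (B ++ [b]).length ≤ treeVar children f := by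
  obtain ⟨b', hb', hne⟩ := Finset.exists_mem_ne
    (show 1 < (children B).card by have := hcard B hB; omega) b
  have h1 := subVar_lower children hcard f 1 (B ++ [b]) (.append _ _ hB hb)
    (fun x hx hp => (hf x hx).1 hp)
  have h2 := subVar_lower children hcard f 0 (B ++ [b']) (.append _ _ hB hb')
    (fun x hx hp => (hf x hx).2 (by
      intro hq
      have e := hp.trans ((congrArg (fun n => List.ofFn (fun i : Fin n => x i))
        (by simp : (B ++ [b']).length = (B ++ [b]).length)).trans hq.symm)
      simp at e
      exact hne e))
  have h3 : ∑ a ∈ ({b, b'} : Finset ℕ), (ENNReal.ofReal ((3 : ℝ)⁻¹ ^ (B.length + 1) *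
      |f (B ++ [a]) - f B|) + subVar children f (B ++ [a])) ≤ treeVar children f := by
    refine le_trans (Finset.sum_le_sum_of_subset ?_)
      ((subVar_step children f B hB).trans (subVar_le_treeVar children f B))
    intro a ha
    simp at ha
    rcases ha with rfl | rfl <;> assumption
  rw [Finset.sum_pair hne.symm] at h3
  have h4 := mul_le_mul_right h3 ((3 : ENNReal) ^ (B.length + 1))
  simp only [mul_add, weight_cancel] at h4
  simp only [List.length_append, List.length_singleton] at h1 h2 ⊢
  have h5 : (1 : ENNReal) ≤ 3 ^ (B.length + 1) * treeVar children f := by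
    refine le_trans ?_ ((add_le_add (add_le_add le_rfl h1) (add_le_add le_rfl h2)).trans h4)
    rw [← ENNReal.ofReal_add (abs_nonneg _) (abs_nonneg _),
      ← ENNReal.ofReal_add (abs_nonneg _) (abs_nonneg _),
      ← ENNReal.ofReal_add (by positivity) (by positivity), ← ENNReal.ofReal_one]
    apply ENNReal.ofReal_le_ofReal
    have a1 := le_abs_self (f (B ++ [b]) - f B)
    have a2 := le_abs_self (1 - f (B ++ [b]))
    have a3 := neg_le_abs (f (B ++ [b']) - f B)
    have a4 := neg_le_abs (0 - f (B ++ [b']))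
    linarith
  rw [← ENNReal.inv_pow]
  rw [ENNReal.inv_le_iff_le_mul (by simp) (by simp)]
  exact h5

/-- For a vertex `A₀` of depth `n ≥ 1`, the infimum of the weighted tree variation over all
functions converging to `1` along every branch through `A₀` and to `0` along every other
branch equals `3^{−n}`, and it is attained by the indicator function of the set of lists
having `A₀` as a prefix. -/
theorem treeVar_inf_indicator
    (children : List ℕ → Finset ℕ)
    (hcard : ∀ s : List ℕ, IsVertex children s → 3 ≤ (children s).card)
    (A₀ : List ℕ) (hA₀ : IsVertex children A₀) (hn : 1 ≤ A₀.length) :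
    sInf (treeVar children ''
        {f : List ℕ → ℝ | ∀ x : ℕ → ℕ, IsBranch children x →
          (PassesThrough x A₀ → ConvergesAlong f x 1) ∧
          (¬ PassesThrough x A₀ → ConvergesAlong f x 0)})
      = (3 : ENNReal)⁻¹ ^ A₀.length ∧
    (fun s => if A₀ <+: s then (1 : ℝ) else 0) ∈
        {f : List ℕ → ℝ | ∀ x : ℕ → ℕ, IsBranch children x →
          (PassesThrough x A₀ → ConvergesAlong f x 1) ∧
          (¬ PassesThrough x A₀ → ConvergesAlong f x 0)} ∧
    treeVar children (fun s => if A₀ <+: s then (1 : ℝ) else 0)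
      = (3 : ENNReal)⁻¹ ^ A₀.length := by
  have hmem : (fun s => if A₀ <+: s then (1 : ℝ) else 0) ∈
        {f : List ℕ → ℝ | ∀ x : ℕ → ℕ, IsBranch children x →
          (PassesThrough x A₀ → ConvergesAlong f x 1) ∧
          (¬ PassesThrough x A₀ → ConvergesAlong f x 0)} := by
    intro x hx
    constructor
    · intro hp
      refine tendsto_const_nhds.congr' ?_
      filter_upwards [Filter.eventually_ge_atTop A₀.length] with n hn
      rw [if_pos (prefix_of_passes hp hn)]
    · intro hp
      refine tendsto_const_nhds.congr fun n => ?_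
      exact (if_neg (fun h => hp (passes_of_prefix h))).symm
  cases hA₀ with
  | nil => simp at hn
  | append B b hB hb =>
    have hval := treeVar_indicator children B b hB hb
    refine ⟨le_antisymm (sInf_le ⟨_, hmem, hval⟩) (le_sInf ?_), hmem, hval⟩
    rintro _ ⟨f, hf, rfl⟩
    exact treeVar_lower children hcard B b hB hb f hf
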